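/- Convolution of normal and exponential tails, exponential-dominated case: let X be standard normal and E standard exponential, independent; let (η_N) and (x_N) be sequences with η_N > 0, x_N → ∞, and x_N/η_N → ∞, and let μ > 0. If (x_N − μη_N²)/(√2·η_N) → −∞ as N→∞, then P(η_N·X + E/μ > x_N) is asymptotically equivalent, as N→∞, to (η_N/(√(2π)·x_N))·exp(−x_N²/(2η_N²)) − (1/√(2π))·exp((μ/2)·(μη_N² − 2x_N))·(η_N/(x_N − μη_N²))·exp(−(x_N − μη_N²)²/(2η_N²)). -/

import Mathlib

open MeasureTheory ProbabilityTheory Filter Real Set Topology Asymptotics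

noncomputable section

/-- The Gauss error function `erf x = (2/√π) ∫_0^x e^{-t²} dt`. -/
def erf (x : ℝ) : ℝ := (2 / Real.sqrt π) * ∫ t in (0 : ℝ)..x, Real.exp (-t ^ 2)

/-!
Let `Z = η X` and `r = μ`. Conditioning on `Z`, the event `Z + E / r > x` has probability `1` when
`Z > x` and `exp (-r (x - Z))` otherwise, so its probability is the tail of `Z` at `x` plus
`exp (-r x)` times the integral of `exp (r Z)` over `{Z ≤ x}`. Exponential tilting by `r` turns that
integral into the mass of `(-∞, x]` under a Gaussian of the same variance and mean `r η²`, and so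
`ℙ (Z + E / r > x) = Q (x / η) + exp (r / 2 * (r η² - 2 x)) * Q ((r η² - x) / η)`
with `Q` the standard Gaussian tail. Both arguments of `Q` tend to `+∞`, hence Mills' ratio
`Q t ~ φ t / t` applies to both terms, and equivalents of nonnegative functions may be added.
The minus sign in the final expression only reflects that `x - r η²` is negative.
-/

open scoped NNReal

lemma hasDerivAt_integral_Ioi {F : Type*} [NormedAddCommGroup F] [NormedSpace ℝ F]
    [CompleteSpace F] {f : ℝ → F} (hf : Integrable f) (hcont : Continuous f) (t : ℝ) :
    HasDerivAt (fun u => ∫ s in Ioi u, f s) (-f t) t := by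
  have hprim : HasDerivAt (fun u => ∫ s in (0 : ℝ)..u, f s) (f t) t :=
    (hcont.integral_hasStrictDerivAt 0 t).hasDerivAt
  refine (hprim.const_sub (∫ s in Ioi (0 : ℝ), f s)).congr_of_eventuallyEq (.of_forall fun u => ?_)
  simp only [← intervalIntegral.integral_Ioi_sub_Ioi' hf.integrableOn hf.integrableOn,
    sub_sub_cancel]

lemma continuous_gaussianPDFReal (m : ℝ) (v : ℝ≥0) : Continuous (gaussianPDFReal m v) := by
  unfold gaussianPDFReal
  fun_prop

lemma hasDerivAt_gaussianPDFReal (m : ℝ) (v : ℝ≥0) (t : ℝ) :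
    HasDerivAt (gaussianPDFReal m v) (-((t - m) / v) * gaussianPDFReal m v t) t := by
  have hexponent : HasDerivAt (fun s => -(s - m) ^ 2 / (2 * v)) (-((t - m) / v)) t := by
    convert! ((((hasDerivAt_id t).sub_const m).pow 2).neg.div_const (2 * (v : ℝ))) using 1
    simp only [id]
    field
  convert! hexponent.exp.const_mul (√(2 * π * v))⁻¹ using 1
  rw [gaussianPDFReal]
  ring

lemma tendsto_gaussianPDFReal_atTop (m : ℝ) {v : ℝ≥0} (hv : v ≠ 0) :
    Tendsto (gaussianPDFReal m v) atTop (𝓝 0) := by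
  have hexponent : Tendsto (fun t => -(t - m) ^ 2 / (2 * v)) atTop atBot :=
    (tendsto_neg_atTop_atBot.comp ((tendsto_pow_atTop two_ne_zero).comp
      (tendsto_atTop_add_const_right _ (-m) tendsto_id))).atBot_div_const (by positivity)
  rw [gaussianPDFReal_def]
  simpa only [mul_zero, Function.comp_apply] using
    (tendsto_exp_atBot.comp hexponent).const_mul (√(2 * π * v))⁻¹

/-- The tail (survival) function `Q` of the standard normal law, in terms of which tails of all
nondegenerate Gaussians are expressed; real-valued so that it can be differentiated. -/
def gaussianTail (t : ℝ) : ℝ := (gaussianReal 0 1).real (Ioi t)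

lemma gaussianTail_nonneg (t : ℝ) : 0 ≤ gaussianTail t := measureReal_nonneg

lemma gaussianTail_eq_integral (t : ℝ) :
    gaussianTail t = ∫ s in Ioi t, gaussianPDFReal 0 1 s := by
  rw [gaussianTail, measureReal_def, gaussianReal_apply_eq_integral 0 one_ne_zero,
    ENNReal.toReal_ofReal (integral_nonneg (gaussianPDFReal_nonneg 0 1))]

lemma hasDerivAt_gaussianTail (t : ℝ) : HasDerivAt gaussianTail (-gaussianPDFReal 0 1 t) t := by
  rw [funext gaussianTail_eq_integral]
  exact hasDerivAt_integral_Ioi (integrable_gaussianPDFReal 0 1) (continuous_gaussianPDFReal 0 1) t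

lemma tendsto_gaussianTail_atTop : Tendsto gaussianTail atTop (𝓝 0) := by
  rw [funext gaussianTail_eq_integral]
  exact tendsto_integral_Ioi_zero tendsto_id

lemma isEquivalent_gaussianTail :
    gaussianTail ~[atTop] fun t => gaussianPDFReal 0 1 t / t := by
  have hpos (t : ℝ) : 0 < gaussianPDFReal 0 1 t := gaussianPDFReal_pos 0 1 t one_ne_zero
  have hderiv : ∀ᶠ t in atTop, HasDerivAt (fun t => gaussianPDFReal 0 1 t / t)
      (-gaussianPDFReal 0 1 t * (1 + t⁻¹ ^ 2)) t := by
    filter_upwards [eventually_ne_atTop 0] with t ht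
    convert! (hasDerivAt_gaussianPDFReal 0 1 t).div (hasDerivAt_id t) ht using 1
    simp only [id, NNReal.coe_one]
    field
  have hratio : Tendsto (fun t => -gaussianPDFReal 0 1 t / (-gaussianPDFReal 0 1 t * (1 + t⁻¹ ^ 2)))
      atTop (𝓝 1) := by
    have hlim : Tendsto (fun t : ℝ => (1 + t⁻¹ ^ 2)⁻¹) atTop (𝓝 1) := by
      simpa using ((tendsto_inv_atTop_zero (𝕜 := ℝ)).pow 2).const_add 1 |>.inv₀ (by simp)
    refine hlim.congr fun t => ?_
    rw [div_mul_cancel_left₀ (neg_ne_zero.2 (hpos t).ne')]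
  refine isEquivalent_of_tendsto_one
    (HasDerivAt.lhopital_zero_atTop (.of_forall hasDerivAt_gaussianTail) hderiv
      (.of_forall fun t => mul_ne_zero (neg_ne_zero.2 (hpos t).ne') (by positivity))
      tendsto_gaussianTail_atTop ?_ hratio)
  exact (tendsto_gaussianPDFReal_atTop 0 one_ne_zero).div_atTop tendsto_id

lemma gaussianPDFReal_div_div (x σ : ℝ) :
    gaussianPDFReal 0 1 (x / σ) / (x / σ) =
      σ * exp (-x ^ 2 / (2 * σ ^ 2)) / (√(2 * π) * x) := by
  rw [gaussianPDFReal, sub_zero, NNReal.coe_one, mul_one, mul_one, div_pow, ← neg_div, div_div,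
    mul_comm (σ ^ 2)]
  simp only [div_eq_mul_inv, mul_inv, inv_inv]
  ring

lemma gaussianReal_eq_map_gaussianReal_zero_one (m σ : ℝ) :
    gaussianReal m (.mk (σ ^ 2) (sq_nonneg σ)) = (gaussianReal 0 1).map fun z => m + σ * z := by
  rw [← Function.comp_def (m + ·) (σ * ·), ← Measure.map_map (by fun_prop) (by fun_prop),
    gaussianReal_map_const_mul, gaussianReal_map_const_add, mul_zero, zero_add, mul_one]

lemma gaussianReal_real_Ioi (m x : ℝ) {σ : ℝ} (hσ : 0 < σ) :
    (gaussianReal m (.mk (σ ^ 2) (sq_nonneg σ))).real (Ioi x) = gaussianTail ((x - m) / σ) := by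
  rw [gaussianReal_eq_map_gaussianReal_zero_one,
    map_measureReal_apply (by fun_prop) measurableSet_Ioi, gaussianTail]
  congr 1
  ext z
  rw [mem_preimage, mem_Ioi, mem_Ioi, div_lt_iff₀' hσ, sub_lt_iff_lt_add']

lemma gaussianReal_real_Iic (m x : ℝ) {σ : ℝ} (hσ : 0 < σ) :
    (gaussianReal m (.mk (σ ^ 2) (sq_nonneg σ))).real (Iic x) = gaussianTail ((m - x) / σ) := by
  have := nullSingletonClass_gaussianReal (μ := 0) (v := 1) one_ne_zero
  have hneg : gaussianReal m (.mk (σ ^ 2) (sq_nonneg σ)) =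
      (gaussianReal 0 1).map fun z => m - σ * z := by
    simpa only [neg_sq, neg_mul, ← sub_eq_add_neg] using
      gaussianReal_eq_map_gaussianReal_zero_one m (-σ)
  rw [hneg, map_measureReal_apply (by fun_prop) measurableSet_Iic, gaussianTail,
    measureReal_congr Ioi_ae_eq_Ici]
  congr 1
  ext z
  rw [mem_preimage, mem_Iic, mem_Ici, div_le_iff₀' hσ, sub_le_comm]

lemma gaussianPDFReal_mul_exp_mul (m : ℝ) (v : ℝ≥0) (t x : ℝ) :
    gaussianPDFReal m v x * exp (t * x) =
      exp (m * t + v * t ^ 2 / 2) * gaussianPDFReal (m + v * t) v x := by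
  rcases eq_or_ne v 0 with rfl | hv
  · simp only [gaussianPDFReal_zero_var, Pi.zero_apply, zero_mul, mul_zero]
  rw [gaussianPDFReal, gaussianPDFReal, mul_assoc, ← exp_add, mul_left_comm, ← exp_add]
  congr 2
  field

lemma gaussianReal_tilted_mul (m : ℝ) (v : ℝ≥0) (t : ℝ) :
    (gaussianReal m v).tilted (t * ·) = gaussianReal (m + v * t) v := by
  rcases eq_or_ne v 0 with rfl | hv
  · simp [Measure.tilted, dirac_withDensity]
  have hmgf : ∫ y, exp (t * y) ∂gaussianReal m v = exp (m * t + v * t ^ 2 / 2) :=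
    congrFun mgf_id_gaussianReal t
  rw [Measure.tilted, hmgf, gaussianReal_of_var_ne_zero _ hv, gaussianReal_of_var_ne_zero _ hv,
    ← withDensity_mul _ (by fun_prop) (by fun_prop)]
  congr with x
  rw [Pi.mul_apply, gaussianPDF, ← ENNReal.ofReal_mul (gaussianPDFReal_nonneg m v x),
    mul_div_assoc', gaussianPDFReal_mul_exp_mul, mul_div_cancel_left₀ _ (exp_ne_zero _),
    gaussianPDF]

lemma expMeasure_Iic {r : ℝ} (hr : 0 < r) (c : ℝ) :
    expMeasure r (Iic c) = ENNReal.ofReal (if 0 ≤ c then 1 - exp (-(r * c)) else 0) := by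
  have := isProbabilityMeasure_expMeasure hr
  rw [← ofReal_cdf, cdf_expMeasure_eq hr]

lemma expMeasure_map_div_const {r c : ℝ} (hr : 0 < r) (hc : 0 < c) :
    (expMeasure r).map (· / c) = expMeasure (r * c) := by
  have := isProbabilityMeasure_expMeasure hr
  have := isProbabilityMeasure_expMeasure (mul_pos hr hc)
  refine Measure.ext_of_Iic _ _ fun a => ?_
  have hpre : (· / c) ⁻¹' Iic a = Iic (c * a) := ext fun _ => div_le_iff₀' hc
  rw [Measure.map_apply (by fun_prop) measurableSet_Iic, hpre, expMeasure_Iic hr,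
    expMeasure_Iic (mul_pos hr hc), mul_assoc]
  simp only [mul_nonneg_iff_of_pos_left hc]

lemma expMeasure_Ioi_of_nonneg {r c : ℝ} (hr : 0 < r) (hc : 0 ≤ c) :
    expMeasure r (Ioi c) = ENNReal.ofReal (exp (-(r * c))) := by
  have := isProbabilityMeasure_expMeasure hr
  have hexp : exp (-(r * c)) ≤ 1 := exp_le_one_iff.2 (neg_nonpos.2 (by positivity))
  rw [← compl_Iic, prob_compl_eq_one_sub measurableSet_Iic, expMeasure_Iic hr, if_pos hc,
    ← ENNReal.ofReal_one, ← ENNReal.ofReal_sub _ (sub_nonneg.2 hexp), sub_sub_cancel]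

lemma expMeasure_Ioi_of_neg {r c : ℝ} (hr : 0 < r) (hc : c < 0) : expMeasure r (Ioi c) = 1 := by
  have := isProbabilityMeasure_expMeasure hr
  rw [← compl_Iic, prob_compl_eq_one_sub measurableSet_Iic, expMeasure_Iic hr, if_neg hc.not_ge,
    ENNReal.ofReal_zero, tsub_zero]

lemma conv_apply {M : Type*} [AddMonoid M] [MeasurableSpace M] [MeasurableAdd₂ M]
    (ρ ν : Measure M) [SFinite ν] {s : Set M} (hs : MeasurableSet s) :
    (ρ ∗ ν) s = ∫⁻ a, ν ((a + ·) ⁻¹' s) ∂ρ := by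
  rw [Measure.conv, Measure.map_apply (by fun_prop) hs,
    Measure.prod_apply (hs.preimage (by fun_prop))]
  rfl

lemma conv_expMeasure_Ioi (ρ : Measure ℝ) {r : ℝ} (hr : 0 < r) (x : ℝ) :
    (ρ ∗ expMeasure r) (Ioi x) =
      ρ (Ioi x) + ∫⁻ t in Iic x, ENNReal.ofReal (exp (-(r * (x - t)))) ∂ρ := by
  have := isProbabilityMeasure_expMeasure hr
  simp only [conv_apply _ _ measurableSet_Ioi, preimage_const_add_Ioi]
  rw [← lintegral_add_compl _ (measurableSet_Iic (a := x)), compl_Iic, add_comm]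
  congr 1
  · rw [setLIntegral_congr_fun measurableSet_Ioi
      fun t (ht : x < t) => expMeasure_Ioi_of_neg hr (sub_neg.2 ht), setLIntegral_one]
  · exact setLIntegral_congr_fun measurableSet_Iic
      fun t (ht : t ≤ x) => expMeasure_Ioi_of_nonneg hr (sub_nonneg.2 ht)

lemma setLIntegral_exp_mul_eq_mgf_mul_tilted (ρ : Measure ℝ) [SFinite ρ] [NeZero ρ] {t : ℝ}
    (hρ : Integrable (fun y => exp (t * y)) ρ) (s : Set ℝ) :
    ∫⁻ y in s, ENNReal.ofReal (exp (t * y)) ∂ρ =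
      ENNReal.ofReal (mgf id ρ t) * ρ.tilted (t * ·) s := by
  have hmgf : 0 < mgf id ρ t := mgf_pos' (NeZero.ne ρ) hρ
  have htilt : ρ.tilted (t * ·) s = ∫⁻ y in s, ENNReal.ofReal (exp (t * y) / mgf id ρ t) ∂ρ :=
    tilted_mul_apply_mgf (X := id) s
  rw [htilt, ← lintegral_const_mul _ (by fun_prop)]
  simp only [← ENNReal.ofReal_mul hmgf.le, mul_div_cancel₀ _ hmgf.ne']

lemma conv_expMeasure_real_Ioi (ρ : Measure ℝ) [IsProbabilityMeasure ρ] {r : ℝ} (hr : 0 < r)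
    (hρ : Integrable (fun t => exp (r * t)) ρ) (x : ℝ) :
    (ρ ∗ expMeasure r).real (Ioi x) =
      ρ.real (Ioi x) + exp (-(r * x)) * mgf id ρ r * (ρ.tilted (r * ·)).real (Iic x) := by
  have := isProbabilityMeasure_tilted hρ
  have hexp (t : ℝ) : ENNReal.ofReal (exp (-(r * (x - t)))) =
      ENNReal.ofReal (exp (-(r * x))) * ENNReal.ofReal (exp (r * t)) := by
    rw [← ENNReal.ofReal_mul (exp_pos _).le, ← exp_add]
    ring_nf
  simp only [measureReal_def, conv_expMeasure_Ioi ρ hr, hexp]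
  rw [lintegral_const_mul _ (by fun_prop), setLIntegral_exp_mul_eq_mgf_mul_tilted ρ hρ, ← mul_assoc,
    ← ENNReal.ofReal_mul (exp_pos _).le, ENNReal.toReal_add (by finiteness) (by finiteness),
    ENNReal.toReal_mul, ENNReal.toReal_ofReal (mul_nonneg (exp_pos _).le mgf_nonneg)]

lemma gaussianReal_conv_expMeasure_real_Ioi (m : ℝ) (v : ℝ≥0) {r : ℝ} (hr : 0 < r) (x : ℝ) :
    (gaussianReal m v ∗ expMeasure r).real (Ioi x) = (gaussianReal m v).real (Ioi x) +
      exp (m * r + v * r ^ 2 / 2 - r * x) * (gaussianReal (m + v * r) v).real (Iic x) := by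
  rw [conv_expMeasure_real_Ioi _ hr (integrable_exp_mul_gaussianReal r), mgf_id_gaussianReal,
    gaussianReal_tilted_mul, ← exp_add, neg_add_eq_sub]

lemma hasLaw_of_map_eq {Ω S : Type*} [MeasurableSpace Ω] [MeasurableSpace S] {P : Measure Ω}
    {ρ : Measure S} [NeZero ρ] {X : Ω → S} (h : P.map X = ρ) : HasLaw X ρ P :=
  ⟨aemeasurable_of_map_neZero (h ▸ ‹NeZero ρ›), h⟩

section

variable {Ω : Type*} [MeasurableSpace Ω] {P : Measure Ω} {X E : Ω → ℝ}

lemma measureReal_lt_gaussian_add_exponential (hX : HasLaw X (gaussianReal 0 1) P)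
    (hE : HasLaw E (expMeasure 1) P) (hXE : IndepFun X E P) {σ r : ℝ} (hσ : 0 < σ) (hr : 0 < r)
    (x : ℝ) :
    P.real {ω | x < σ * X ω + E ω / r} = gaussianTail (x / σ) +
      exp (r / 2 * (r * σ ^ 2 - 2 * x)) * gaussianTail ((r * σ ^ 2 - x) / σ) := by
  have := isProbabilityMeasure_expMeasure hr
  have hσX := gaussianReal_const_mul hX σ
  have hEr : HasLaw (fun ω => E ω / r) (expMeasure r) P :=
    HasLaw.fun_comp (Y := (· / r))
      ⟨by fun_prop, by rw [expMeasure_map_div_const one_pos hr, one_mul]⟩ hE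
  have hsum := (hXE.comp (measurable_const_mul σ) (measurable_div_const r)).hasLaw_fun_add hσX hEr
  rw [mul_zero, mul_one] at hsum
  rw [hsum.measureReal_eq measurableSet_Ioi]
  refine (gaussianReal_conv_expMeasure_real_Ioi 0 _ hr x).trans ?_
  rw [gaussianReal_real_Ioi 0 x hσ, gaussianReal_real_Iic _ x hσ]
  simp only [NNReal.coe_mk, sub_zero, zero_mul, zero_add]
  ring_nf

theorem convolution_normal_exponential_exponential_dominated_general
    (hX : HasLaw X (gaussianReal 0 1) P) (hE : HasLaw E (expMeasure 1) P) (hXE : IndepFun X E P)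
    {ι : Type*} {l : Filter ι} {η x μ : ι → ℝ} (hη : ∀ᶠ i in l, 0 < η i) (hμ : ∀ᶠ i in l, 0 < μ i)
    (hxη : Tendsto (fun i => x i / η i) l atTop)
    (hc : Tendsto (fun i => (x i - μ i * η i ^ 2) / (√2 * η i)) l atBot) :
    (fun i => P.real {ω | x i < η i * X ω + E ω / μ i}) ~[l]
      fun i => η i * exp (-x i ^ 2 / (2 * η i ^ 2)) / (√(2 * π) * x i)
          - 1 / √(2 * π) * exp (μ i / 2 * (μ i * η i ^ 2 - 2 * x i)) *
            (η i / (x i - μ i * η i ^ 2)) * exp (-(x i - μ i * η i ^ 2) ^ 2 / (2 * η i ^ 2)) := by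
  have hgap : Tendsto (fun i => (μ i * η i ^ 2 - x i) / η i) l atTop := by
    refine ((tendsto_neg_atBot_atTop.comp hc).const_mul_atTop (show 0 < √2 by positivity)).congr
      fun i => ?_
    rw [Function.comp_apply, ← neg_div, neg_sub, ← mul_div_assoc,
      mul_div_mul_left _ _ (by positivity)]
  have hfirst := (isEquivalent_gaussianTail.comp_tendsto hxη).symm
  have hsecond := (IsEquivalent.refl (u := fun i => exp (μ i / 2 * (μ i * η i ^ 2 - 2 * x i)))).mul
    (isEquivalent_gaussianTail.comp_tendsto hgap).symm
  have hsum := (hfirst.add_add_of_nonneg (fun _ => gaussianTail_nonneg _)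
    (fun _ => mul_nonneg (exp_pos _).le (gaussianTail_nonneg _)) hsecond).symm
  refine (hsum.congr_left ?_).congr_right (.of_forall fun i => ?_)
  · filter_upwards [hη, hμ] with i hηi hμi
    exact (measureReal_lt_gaussian_add_exponential hX hE hXE hηi hμi (x i)).symm
  · simp only [Pi.add_apply, Pi.mul_apply, Function.comp_apply, gaussianPDFReal_div_div]
    rw [← neg_sub (x i) (μ i * η i ^ 2), neg_sq, mul_neg, div_neg, mul_neg, ← sub_eq_add_neg]
    simp only [div_eq_mul_inv, mul_inv]
    ring

end

/-- **Convolution of normal and exponential tails, exponential-dominated case.** If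
`(x_N - μ η_N²)/(√2 η_N) → -∞`, then `ℙ(η_N X + E/μ > x_N)` is asymptotically equivalent to
`η_N e^{-x_N²/(2η_N²)}/(√(2π) x_N)
  - (1/√(2π)) e^{(μ/2)(μη_N² - 2x_N)} (η_N/(x_N - μη_N²)) e^{-(x_N - μη_N²)²/(2η_N²)}`. -/
theorem convolution_normal_exponential_exponential_dominated
    {Ω : Type*} [MeasureSpace Ω] [IsProbabilityMeasure (ℙ : Measure Ω)]
    (X E : Ω → ℝ)
    (hX : Measure.map X (ℙ : Measure Ω) = gaussianReal 0 1)
    (hE : Measure.map E (ℙ : Measure Ω) = expMeasure 1)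
    (hXE : IndepFun X E (ℙ : Measure Ω))
    (η x : ℕ → ℝ) (hη : ∀ N, 0 < η N)
    (hx : Tendsto x atTop atTop)
    (hxη : Tendsto (fun N => x N / η N) atTop atTop)
    (μ : ℝ) (hμ : 0 < μ)
    (hc : Tendsto (fun N => (x N - μ * (η N) ^ 2) / (Real.sqrt 2 * η N)) atTop atBot) :
    (fun N : ℕ => (ℙ {ω | η N * X ω + E ω / μ > x N}).toReal) ~[atTop]
      (fun N : ℕ =>
        η N * Real.exp (-(x N) ^ 2 / (2 * (η N) ^ 2)) / (Real.sqrt (2 * π) * x N)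
          - 1 / Real.sqrt (2 * π) * Real.exp (μ / 2 * (μ * (η N) ^ 2 - 2 * x N)) *
            (η N / (x N - μ * (η N) ^ 2)) *
            Real.exp (-(x N - μ * (η N) ^ 2) ^ 2 / (2 * (η N) ^ 2))) := by
  have hE' : HasLaw E (expMeasure 1) ℙ := by
    have := isProbabilityMeasure_expMeasure one_pos
    exact hasLaw_of_map_eq hE
  exact convolution_normal_exponential_exponential_dominated_general (hasLaw_of_map_eq hX) hE' hXE
    (.of_forall hη) (.of_forall fun _ => hμ) hxη hc

end
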